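/- arXiv:1810.05190 — 2 statements merged into one kernel-verified Lean document; each statement's English description precedes it below -/
import Mathlib

section
/- For all natural numbers m, n, p with m ≥ (p+1)(n+1), Breaker has a winning strategy for the (p,p)-crossing game on S_{m×n}. -/
namespace CrossingGames

/-- A vertex of the square integer lattice `ℤ²`. -/
abbrev Vtx : Type := ℤ × ℤ

/-- An edge of the square integer lattice `ℤ²`, encoded as a base vertex together with a
direction: `(v, true)` is the horizontal edge joining `v = (x,y)` to `(x+1,y)`, while
`(v, false)` is the vertical edge joining `v = (x,y)` to `(x,y+1)`. -/
abbrev Edge : Type := Vtx × Bool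

/-- The two endpoints of an edge. -/
def ends (e : Edge) : Vtx × Vtx :=
  (e.1, if e.2 then (e.1.1 + 1, e.1.2) else (e.1.1, e.1.2 + 1))

/-- The edge `e` joins the vertices `u` and `v`. -/
def joins (e : Edge) (u v : Vtx) : Prop :=
  ((ends e).1 = u ∧ (ends e).2 = v) ∨ ((ends e).1 = v ∧ (ends e).2 = u)

/-- The vertex set of the grid `Λ_{m×n}`: all `(x,y) ∈ ℤ²` with `1 ≤ x ≤ m`, `1 ≤ y ≤ n`. -/
def lamVtx (m n : ℕ) : Set Vtx :=
  {v | 1 ≤ v.1 ∧ v.1 ≤ (m : ℤ) ∧ 1 ≤ v.2 ∧ v.2 ≤ (n : ℤ)}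

/-- The edge set of the grid `Λ_{m×n}`: lattice edges with both endpoints in `Λ_{m×n}`. -/
def lamEdges (m n : ℕ) : Set Edge :=
  {e | (ends e).1 ∈ lamVtx m n ∧ (ends e).2 ∈ lamVtx m n}

/-- The edge set of the board `S_{m×n}`: the grid `Λ_{m×n}` with all of its leftmost and
rightmost vertical edges deleted. -/
def sEdges (m n : ℕ) : Set Edge :=
  {e ∈ lamEdges m n | ¬ (e.2 = false ∧ (e.1.1 = 1 ∨ e.1.1 = (m : ℤ)))}

/-- The list of consecutive pairs of a list. -/
def cp {α : Type*} (l : List α) : List (α × α) := l.zip l.tail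

/-- `S` contains all the edges of a left-right crossing path of a board with `m` columns
and `n` rows: a path of edges of `S` joining a vertex `(1,y)` on the left-hand side of the
board to a vertex `(m,y')` on its right-hand side. -/
def HasCrossing (m n : ℕ) (S : Set Edge) : Prop :=
  ∃ l : List Vtx,
    (∃ v, l.head? = some v ∧ v.1 = 1) ∧
    (∃ v, l.getLast? = some v ∧ v.1 = (m : ℤ)) ∧
    (∀ v ∈ l, v ∈ lamVtx m n) ∧
    ∀ p ∈ cp l, ∃ e ∈ S, joins e p.1 p.2

/-- A strategy: given the list of all moves played so far (oldest first), produce the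
next move (a finite set of edges to claim). -/
abbrev Strategy : Type := List (Finset Edge) → Finset Edge

/-- The union of the moves sitting in positions of the given parity of a history
(`true`: positions 0, 2, 4, …; `false`: positions 1, 3, 5, …). -/
def altUnion : Bool → List (Finset Edge) → Finset Edge
  | _, [] => ∅
  | true, mv :: h => mv ∪ altUnion false h
  | false, _ :: h => altUnion true h

/-- All edges claimed by the player moving first (i.e. on even positions) in a history. -/
def firstClaimed (h : List (Finset Edge)) : Finset Edge := altUnion true h

/-- All edges claimed by the player moving second (i.e. on odd positions) in a history. -/
def secondClaimed (h : List (Finset Edge)) : Finset Edge := altUnion false h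

/-- All edges claimed so far in a history. -/
def allClaimed (h : List (Finset Edge)) : Finset Edge := h.foldr (· ∪ ·) ∅

/-- The history of moves (oldest first) after `t` full rounds, when the player moving
first uses strategy `σ` and the player moving second uses strategy `τ`. -/
def hist (σ τ : Strategy) : ℕ → List (Finset Edge)
  | 0 => []
  | t + 1 =>
    let h := hist σ τ t
    h ++ [σ h, τ (h ++ [σ h])]

/-- The move `mv` is legal on `board` after the history `h` for a player of bias `k`: it
consists of as-yet-unclaimed edges of the board, and there are exactly `k` of them, unless
fewer than `k` unclaimed edges remain, in which case the player claims all of them. -/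
def LegalMove (board : Set Edge) (h : List (Finset Edge)) (k : ℕ) (mv : Finset Edge) : Prop :=
  (↑mv : Set Edge) ⊆ board \ ↑(allClaimed h) ∧
    (mv.card = k ∨ (mv.card < k ∧ board \ ↑(allClaimed h) ⊆ (↑mv : Set Edge)))

/-- The player moving first (with bias `p`) always moves legally when playing `σ`
against `τ`. -/
def FirstLegal (board : Set Edge) (p : ℕ) (σ τ : Strategy) : Prop :=
  ∀ t, LegalMove board (hist σ τ t) p (σ (hist σ τ t))

/-- The player moving second (with bias `q`) always moves legally when playing `τ`
against `σ`. -/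
def SecondLegal (board : Set Edge) (q : ℕ) (σ τ : Strategy) : Prop :=
  ∀ t, LegalMove board (hist σ τ t ++ [σ (hist σ τ t)]) q (τ (hist σ τ t ++ [σ (hist σ τ t)]))

/-- Maker (playing first and claiming `p` edges per turn) has a winning strategy for the
Maker–Breaker game on `board` in which Breaker claims `q` edges per turn: she can
guarantee that at some point her claimed edges satisfy the winning condition `win`. -/
def MakerWins (board : Set Edge) (win : Set Edge → Prop) (p q : ℕ) : Prop :=
  ∃ σ : Strategy, ∀ τ : Strategy, SecondLegal board q σ τ →
    FirstLegal board p σ τ ∧ ∃ t, win ↑(firstClaimed (hist σ τ t))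

/-- Breaker (playing second and claiming `q` edges per turn) has a winning strategy for
the Maker–Breaker game on `board` in which Maker claims `p` edges per turn: he can
forever prevent Maker's claimed edges from satisfying the winning condition `win`. -/
def BreakerWins (board : Set Edge) (win : Set Edge → Prop) (p q : ℕ) : Prop :=
  ∃ τ : Strategy, ∀ σ : Strategy, FirstLegal board p σ τ →
    SecondLegal board q σ τ ∧ ∀ t, ¬ win ↑(firstClaimed (hist σ τ t))

section Abstract
variable {α : Type*} [DecidableEq α]

/-- Builder (set `F`), moving second against Blocker (set `D`), can force `W`. -/
inductive BW (E : Finset α) (p : ℕ) (W : Finset α → Prop) : Finset α → Finset α → Prop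
  | win (F D : Finset α) : W F → BW E p W F D
  | step (F D : Finset α) (f : Finset α → Finset α)
      (h1 : ∀ Y, Y ⊆ E \ (F ∪ D) → Y.card ≤ p →
        f Y ⊆ E \ (F ∪ (D ∪ Y)) ∧ (f Y).card ≤ p)
      (h2 : ∀ Y, Y ⊆ E \ (F ∪ D) → Y.card ≤ p → BW E p W (F ∪ f Y) (D ∪ Y)) :
      BW E p W F D

theorem BW.not_iff {E : Finset α} {p : ℕ} {W : Finset α → Prop} {F D : Finset α}
    (h : ¬ BW E p W F D) :
    ∃ Y, Y ⊆ E \ (F ∪ D) ∧ Y.card ≤ p ∧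
      ∀ X, X ⊆ E \ (F ∪ (D ∪ Y)) → X.card ≤ p → ¬ BW E p W (F ∪ X) (D ∪ Y) := by
  by_contra hc
  push Not at hc
  apply h
  have hc' : ∀ Y, ∃ X, Y ⊆ E \ (F ∪ D) → Y.card ≤ p →
      X ⊆ E \ (F ∪ (D ∪ Y)) ∧ X.card ≤ p ∧ BW E p W (F ∪ X) (D ∪ Y) := by
    intro Y
    by_cases hY : Y ⊆ E \ (F ∪ D) ∧ Y.card ≤ p
    · obtain ⟨X, a, b, c⟩ := hc Y hY.1 hY.2
      exact ⟨X, fun _ _ => ⟨a, b, c⟩⟩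
    · exact ⟨∅, fun h1 h2 => absurd ⟨h1, h2⟩ hY⟩
  choose f hf using hc'
  exact BW.step F D f (fun Y h1 h2 => ⟨(hf Y h1 h2).1, (hf Y h1 h2).2.1⟩)
    (fun Y h1 h2 => (hf Y h1 h2).2.2)

theorem BW.mono {E : Finset α} {p : ℕ} {W : Finset α → Prop}
    (hW : ∀ F F' : Finset α, F ⊆ F' → W F → W F') {F D' : Finset α}
    (h : BW E p W F D') : ∀ F' D : Finset α, F ⊆ F' → D ⊆ D' → BW E p W F' D := by
  induction h with
  | win F D' hw => intro F' D h1 _; exact BW.win _ _ (hW _ _ h1 hw)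
  | step F D' f h1 h2 ih =>
    intro F' D hF hD
    have key : ∀ Y, Y ⊆ E \ (F' ∪ D) → Y.card ≤ p →
        Y \ D' ⊆ E \ (F ∪ D') ∧ (Y \ D').card ≤ p := by
      intro Y hY hc
      refine ⟨?_, (Finset.card_le_card Finset.sdiff_subset).trans hc⟩
      intro y hy
      have := @hY y
      have := @hF y
      simp only [Finset.mem_sdiff, Finset.mem_union] at *
      tauto
    refine BW.step F' D (fun Y => f (Y \ D') \ F') ?_ ?_
    · intro Y hY hc
      obtain ⟨k1, k2⟩ := key Y hY hc
      obtain ⟨g1, g2⟩ := h1 _ k1 k2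
      refine ⟨?_, (Finset.card_le_card Finset.sdiff_subset).trans g2⟩
      intro x hx
      have := @g1 x
      have := @hD x
      simp only [Finset.mem_sdiff, Finset.mem_union] at *
      tauto
    · intro Y hY hc
      obtain ⟨k1, k2⟩ := key Y hY hc
      refine ih _ k1 k2 _ _ ?_ ?_
      · intro x hx
        have := @hF x
        simp only [Finset.mem_sdiff, Finset.mem_union] at *
        tauto
      · intro x hx
        have := @hD x
        simp only [Finset.mem_sdiff, Finset.mem_union] at *
        tauto

theorem BW.not_opp {E : Finset α} {p : ℕ} {W : Finset α → Prop} {ρ : α → α}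
    (hnb : ∀ F D : Finset α, F ⊆ E → D ⊆ E → Disjoint F D → W F → ¬ W (D.image ρ))
    {F D : Finset α} (h : BW E p W F D) :
    F ⊆ E → D ⊆ E → Disjoint F D → ¬ W (D.image ρ) := by
  induction h with
  | win F D hw => intro a b c; exact hnb F D a b c hw
  | step F D f h1 h2 ih =>
    intro hF hD hdis
    obtain ⟨g1, g2⟩ := h1 ∅ (by simp) (by simp)
    have := ih ∅ (by simp) (by simp)
    rw [Finset.union_empty] at this
    refine this (Finset.union_subset hF (g1.trans Finset.sdiff_subset)) hD ?_
    rw [Finset.disjoint_union_left]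
    refine ⟨hdis, ?_⟩
    rw [Finset.disjoint_left]
    intro x hx hx'
    have := @g1 x hx
    simp only [Finset.mem_sdiff, Finset.mem_union] at this
    tauto

theorem BW.resp {E : Finset α} {p : ℕ} {W : Finset α → Prop}
    (hW : ∀ F F' : Finset α, F ⊆ F' → W F → W F')
    {F D : Finset α} (h : BW E p W F D) (Y : Finset α) (hY : Y ⊆ E \ (F ∪ D))
    (hc : Y.card ≤ p) :
    ∃ X, X ⊆ E \ (F ∪ (D ∪ Y)) ∧ X.card ≤ p ∧ BW E p W (F ∪ X) (D ∪ Y) := by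
  cases h with
  | win _ _ hw => exact ⟨∅, by simp, by simp, BW.win _ _ (by simpa using hw)⟩
  | step _ _ f h1 h2 => exact ⟨f Y, (h1 Y hY hc).1, (h1 Y hY hc).2, h2 Y hY hc⟩

theorem BW.steal {E : Finset α} {p : ℕ} {W : Finset α → Prop} {ρ : α → α}
    (hρ : ∀ x, ρ (ρ x) = x) (hE : ∀ x ∈ E, ρ x ∈ E)
    (hW : ∀ F F' : Finset α, F ⊆ F' → W F → W F')
    (hnb : ∀ F D : Finset α, F ⊆ E → D ⊆ E → Disjoint F D → W F → ¬ W (D.image ρ))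
    {F D : Finset α} (h : BW E p W F D) :
    F ⊆ E → D ⊆ E → Disjoint F D → ∀ Y, Y ⊆ E \ (F ∪ D) → Y.card ≤ p →
      BW E p W ((D ∪ Y).image ρ) (F.image ρ) → False := by
  have him : ∀ S : Finset α, (S.image ρ).image ρ = S := by
    intro S
    rw [Finset.image_image]
    have : ρ ∘ ρ = id := funext hρ
    rw [this, Finset.image_id]
  have hinj : Function.Injective ρ := fun a b hab => by rw [← hρ a, hab, hρ]
  have himE : ∀ S : Finset α, S ⊆ E → S.image ρ ⊆ E := by
    intro S hS x hx
    obtain ⟨y, hy, rfl⟩ := Finset.mem_image.1 hx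
    exact hE _ (hS hy)
  induction h with
  | win F D hw =>
    intro hF hD hdis Y hY hc h2
    have hYE : Y ⊆ E := hY.trans Finset.sdiff_subset
    have := BW.not_opp hnb h2 (himE _ (Finset.union_subset hD hYE)) (himE _ hF) ?_
    · rw [him] at this
      exact this hw
    · rw [Finset.disjoint_image hinj, Finset.disjoint_left]
      intro x hx hx'
      have := @hY x
      have := Finset.disjoint_left.1 hdis hx'
      simp only [Finset.mem_sdiff, Finset.mem_union] at *
      tauto
  | step F D f h1 h2 ih =>
    intro hF hD hdis Y hY hc hb
    obtain ⟨g1, g2⟩ := h1 Y hY hc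
    have hYE : Y ⊆ E := hY.trans Finset.sdiff_subset
    have hXE : f Y ⊆ E := g1.trans Finset.sdiff_subset
    have hdis2 : Disjoint (F ∪ f Y) (D ∪ Y) := by
      rw [Finset.disjoint_left]
      intro x hx hx'
      have := @hY x
      have := @g1 x
      have : x ∈ F → x ∉ D := fun h => Finset.disjoint_left.1 hdis h
      simp only [Finset.mem_sdiff, Finset.mem_union] at *
      tauto
    obtain ⟨Z, z1, z2, z3⟩ := hb.resp hW ((f Y).image ρ) (by
      intro x hx
      obtain ⟨y, hy, rfl⟩ := Finset.mem_image.1 hx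
      have := g1 hy
      simp only [Finset.mem_sdiff, Finset.mem_union, hinj.mem_finset_image] at *
      refine ⟨hE _ this.1, ?_⟩
      tauto) (Finset.card_image_le.trans g2)
    refine ih Y hY hc (Finset.union_subset hF hXE) (Finset.union_subset hD hYE) hdis2
      (Z.image ρ) ?_ (Finset.card_image_le.trans z2) ?_
    · intro x hx
      obtain ⟨y, hy, rfl⟩ := Finset.mem_image.1 hx
      have := z1 hy
      simp only [Finset.mem_sdiff, Finset.mem_union] at this ⊢
      refine ⟨hE _ this.1, ?_⟩
      intro hh
      apply this.2
      have e : ∀ S : Finset α, ρ y ∈ S → y ∈ S.image ρ := fun S hS =>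
        Finset.mem_image.2 ⟨_, hS, hρ y⟩
      rcases hh with (h | h) | (h | h)
      · exact Or.inr (Or.inl (e _ h))
      · exact Or.inr (Or.inr (e _ h))
      · exact Or.inl (e _ (Finset.mem_union_left _ h))
      · exact Or.inl (e _ (Finset.mem_union_right _ h))
    · rw [Finset.image_union (s₁ := D ∪ Y), him, Finset.image_union (s₁ := F)]
      exact z3

end Abstract

/-- The duality involution. -/
def rho (e : Edge) : Edge :=
  if e.2 then ((e.1.2, e.1.1), true) else ((e.1.2 + 1, e.1.1 - 1), false)

theorem rho_rho (e : Edge) : rho (rho e) = e := by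
  obtain ⟨⟨x, y⟩, b⟩ := e
  cases b <;> simp [rho]

theorem mem_sEdges_h (m n : ℕ) (x y : ℤ) :
    (((x, y), true) : Edge) ∈ sEdges m n ↔ 1 ≤ x ∧ x + 1 ≤ m ∧ 1 ≤ y ∧ y ≤ n := by
  simp [sEdges, lamEdges, ends, lamVtx]; omega

theorem mem_sEdges_v (m n : ℕ) (x y : ℤ) :
    (((x, y), false) : Edge) ∈ sEdges m n ↔ 2 ≤ x ∧ x + 1 ≤ m ∧ 1 ≤ y ∧ y + 1 ≤ n := by
  simp [sEdges, lamEdges, ends, lamVtx]; omega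

theorem sEdges_finite (m n : ℕ) : (sEdges m n).Finite := by
  have : (((Set.Icc (1 : ℤ) m) ×ˢ (Set.Icc (1 : ℤ) n)) ×ˢ (Set.univ : Set Bool)).Finite :=
    ((Set.finite_Icc _ _).prod (Set.finite_Icc _ _)).prod Set.finite_univ
  refine this.subset ?_
  rintro ⟨⟨x, y⟩, b⟩ h
  cases b
  · rw [mem_sEdges_v] at h; simp; omega
  · rw [mem_sEdges_h] at h; simp; omega

/-- The edges of the square block. -/
noncomputable def blk (n : ℕ) : Finset Edge := (sEdges_finite (n + 1) n).toFinset

theorem mem_blk_h (n : ℕ) (x y : ℤ) :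
    (((x, y), true) : Edge) ∈ blk n ↔ 1 ≤ x ∧ x ≤ n ∧ 1 ≤ y ∧ y ≤ n := by
  simp [blk, mem_sEdges_h]

theorem mem_blk_v (n : ℕ) (x y : ℤ) :
    (((x, y), false) : Edge) ∈ blk n ↔ 2 ≤ x ∧ x ≤ n ∧ 1 ≤ y ∧ y + 1 ≤ n := by
  simp [blk, mem_sEdges_v]

theorem rho_blk (n : ℕ) : ∀ e ∈ blk n, rho e ∈ blk n := by
  rintro ⟨⟨x, y⟩, b⟩ h
  cases b
  · rw [mem_blk_v] at h; simp only [rho, Bool.false_eq_true, if_false, mem_blk_v]; omega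
  · rw [mem_blk_h] at h; simp only [rho, if_true, mem_blk_h]; omega

/-- Adjacency through edges of `S`. -/
def Adj (S : Finset Edge) (u v : Vtx) : Prop := ∃ e ∈ S, joins e u v

theorem adj_iff (S : Finset Edge) (x y x' y' : ℤ) : Adj S (x, y) (x', y') ↔
    (((x, y), true) ∈ S ∧ x' = x + 1 ∧ y' = y) ∨
    (((x', y'), true) ∈ S ∧ x = x' + 1 ∧ y = y') ∨
    (((x, y), false) ∈ S ∧ x' = x ∧ y' = y + 1) ∨
    (((x', y'), false) ∈ S ∧ x = x' ∧ y = y' + 1) := by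
  constructor
  · rintro ⟨⟨⟨a, b⟩, c⟩, he, hj⟩
    cases c <;> simp [joins, ends] at hj <;> rcases hj with ⟨⟨rfl, rfl⟩, rfl, rfl⟩ | ⟨⟨rfl, rfl⟩, rfl, rfl⟩ <;> simp [he]
  · rintro (⟨h, rfl, rfl⟩ | ⟨h, rfl, rfl⟩ | ⟨h, rfl, rfl⟩ | ⟨h, rfl, rfl⟩)
    all_goals exact ⟨_, h, by simp [joins, ends]⟩

/-- `S` crosses the square block. -/
def Cr (n : ℕ) (S : Finset Edge) : Prop :=
  ∃ y z : ℤ, 1 ≤ y ∧ y ≤ n ∧ Relation.ReflTransGen (Adj S) (1, y) ((n : ℤ) + 1, z)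

theorem Cr.mono (n : ℕ) (F F' : Finset Edge) (h : F ⊆ F') : Cr n F → Cr n F' := by
  rintro ⟨y, z, h1, h2, h3⟩
  exact ⟨y, z, h1, h2, Relation.ReflTransGen.mono (fun a b ⟨e, he, hj⟩ => ⟨e, h he, hj⟩) _ _ h3⟩

theorem mem_rho_h (D : Finset Edge) (x y : ℤ) :
    (((x, y), true) : Edge) ∈ D.image rho ↔ ((y, x), true) ∈ D := by
  constructor
  · intro h
    obtain ⟨e, he, h⟩ := Finset.mem_image.1 h
    have := congrArg rho h
    rw [rho_rho] at this
    rw [this] at he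
    simpa [rho] using he
  · intro h
    exact Finset.mem_image.2 ⟨_, h, by simp [rho]⟩

theorem mem_rho_v (D : Finset Edge) (x y : ℤ) :
    (((x, y), false) : Edge) ∈ D.image rho ↔ ((y + 1, x - 1), false) ∈ D := by
  constructor
  · intro h
    obtain ⟨e, he, h⟩ := Finset.mem_image.1 h
    have := congrArg rho h
    rw [rho_rho] at this
    rw [this] at he
    simpa [rho] using he
  · intro h
    exact Finset.mem_image.2 ⟨_, h, by simp [rho]⟩

theorem potential (n : ℕ) (D : Finset Edge) (hD : D ⊆ blk n) (i0 : ℤ)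
    (h1 : 1 ≤ i0) (h2 : i0 ≤ n) (w : Vtx)
    (h : Relation.ReflTransGen (Adj (D.image rho)) (1, i0) w) :
    1 ≤ w.2 ∧ w.2 ≤ n ∧ ∃ φ : ℤ → ℤ → ℤ, (∀ y, φ 1 y = 0) ∧
      (∀ x y, ((x, y), true) ∉ D → φ (x + 1) y = φ x y) ∧
      (∀ x y, 1 ≤ y → ((x, y), false) ∉ D →
        φ x (y + 1) = φ x y - (if w.2 < x ∧ w.1 = y + 1 then 1 else 0)) ∧
      (∀ y, 1 ≤ y → φ (n + 1) y = if y + 1 ≤ w.1 then 1 else 0) := by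
  induction h with
  | refl =>
    refine ⟨h1, h2, fun _ _ => 0, fun _ => rfl, fun _ _ _ => rfl, ?_, ?_⟩
    · intro x y hy _
      rw [if_neg (by simp; omega)]; rfl
    · intro y hy
      rw [if_neg (by simp; omega)]
  | tail hab hbc ih =>
    rename_i b c
    obtain ⟨k1, k2, φ, p1, p2, p3, p4⟩ := ih
    obtain ⟨X, Y⟩ := b
    obtain ⟨X', Y'⟩ := c
    rw [adj_iff] at hbc
    simp only [mem_rho_h, mem_rho_v] at hbc
    simp only at *
    rcases hbc with ⟨he, rfl, rfl⟩ | ⟨he, rfl, rfl⟩ | ⟨he, rfl, rfl⟩ | ⟨he, rfl, rfl⟩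
    · refine ⟨k1, k2, fun x y => φ x y + (if Y' < x ∧ y = X then 1 else 0), ?_, ?_, ?_, ?_⟩
      · intro y; simp only [p1]; rw [if_neg (by omega)]; rfl
      · intro x y hxy
        simp only [p2 x y hxy]
        have : ¬ (x = Y' ∧ y = X) := by rintro ⟨rfl, rfl⟩; exact hxy he
        split_ifs <;> omega
      · intro x y hy hxy
        simp only [p3 x y hy hxy]
        split_ifs <;> omega
      · intro y hy
        simp only [p4 y hy]
        split_ifs <;> omega
    · refine ⟨k1, k2, fun x y => φ x y - (if Y < x ∧ y = X' then 1 else 0), ?_, ?_, ?_, ?_⟩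
      · intro y; simp only [p1]; rw [if_neg (by omega)]; rfl
      · intro x y hxy
        simp only [p2 x y hxy]
        have : ¬ (x = Y ∧ y = X') := by rintro ⟨rfl, rfl⟩; exact hxy he
        split_ifs <;> omega
      · intro x y hy hxy
        simp only [p3 x y hy hxy]
        split_ifs <;> omega
      · intro y hy
        simp only [p4 y hy]
        split_ifs <;> omega
    · have hb := (mem_blk_v _ _ _).1 (hD he)
      refine ⟨by omega, by omega, φ, p1, p2, ?_, p4⟩
      intro x y hy hxy
      rw [p3 x y hy hxy]
      have : ¬ (x = Y + 1 ∧ y = X' - 1) := by rintro ⟨rfl, rfl⟩; exact hxy he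
      split_ifs <;> omega
    · have hb := (mem_blk_v _ _ _).1 (hD he)
      refine ⟨by omega, by omega, φ, p1, p2, ?_, p4⟩
      intro x y hy hxy
      rw [p3 x y hy hxy]
      have : ¬ (x = Y' + 1 ∧ y = X - 1) := by rintro ⟨rfl, rfl⟩; exact hxy he
      split_ifs <;> omega

theorem not_both (n : ℕ) (hn : 1 ≤ n) (F D : Finset Edge) (hF : F ⊆ blk n) (hD : D ⊆ blk n)
    (hdis : Disjoint F D) : Cr n F → ¬ Cr n (D.image rho) := by
  rintro ⟨y, z, hy1, hy2, hp⟩ ⟨i, j, hi1, hi2, hq⟩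
  obtain ⟨-, -, φ, p1, p2, p3, p4⟩ := potential n D hD i hi1 hi2 _ hq
  simp only at p3 p4
  have key : ∀ w, Relation.ReflTransGen (Adj F) (1, y) w →
      1 ≤ w.2 ∧ w.2 ≤ n ∧ φ w.1 w.2 = 0 := by
    intro w hw
    induction hw with
    | refl => exact ⟨hy1, hy2, p1 y⟩
    | tail hab hbc ih =>
      rename_i b c
      obtain ⟨X, Y⟩ := b
      obtain ⟨X', Y'⟩ := c
      rw [adj_iff] at hbc
      simp only at *
      rcases hbc with ⟨he, rfl, rfl⟩ | ⟨he, rfl, rfl⟩ | ⟨he, rfl, rfl⟩ | ⟨he, rfl, rfl⟩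
      · have := p2 _ _ (Finset.disjoint_left.1 hdis he)
        exact ⟨ih.1, ih.2.1, by rw [this]; exact ih.2.2⟩
      · have := p2 _ _ (Finset.disjoint_left.1 hdis he)
        exact ⟨ih.1, ih.2.1, by rw [← this]; exact ih.2.2⟩
      · have hb := (mem_blk_v _ _ _).1 (hF he)
        have := p3 _ _ (by omega) (Finset.disjoint_left.1 hdis he)
        rw [if_neg (by omega)] at this
        exact ⟨by omega, by omega, by rw [this]; omega⟩
      · have hb := (mem_blk_v _ _ _).1 (hF he)
        have := p3 _ _ (by omega) (Finset.disjoint_left.1 hdis he)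
        rw [if_neg (by omega)] at this
        exact ⟨by omega, by omega, by omega⟩
  obtain ⟨a, b, c⟩ := key _ hp
  simp only at a b c
  rw [p4 z a, if_pos (by omega)] at c
  omega

theorem no_BW (n p : ℕ) (hn : 1 ≤ n) : ¬ BW (blk n) p (Cr n) ∅ ∅ := by
  intro h
  exact BW.steal (ρ := rho) rho_rho (rho_blk n) (Cr.mono n) (not_both n hn) h
    (by simp) (by simp) (by simp) ∅ (by simp) (by simp) (by simpa using h)

/-- Translation of an edge. -/
def tr (a : ℕ) (e : Edge) : Edge := ((e.1.1 + a, e.1.2), e.2)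

theorem tr_inj (a : ℕ) : Function.Injective (tr a) := by
  rintro ⟨⟨x, y⟩, b⟩ ⟨⟨x', y'⟩, b'⟩ h
  simp [tr] at h ⊢
  exact h

/-- The part of `M` inside the block at offset `a`, translated back. -/
noncomputable def pull (n a : ℕ) (M : Finset Edge) : Finset Edge :=
  (blk n).filter (fun e => tr a e ∈ M)

theorem mem_pull {n a : ℕ} {M : Finset Edge} {e : Edge} :
    e ∈ pull n a M ↔ e ∈ blk n ∧ tr a e ∈ M := by simp [pull]

theorem pull_union (n a : ℕ) (M N : Finset Edge) :
    pull n a (M ∪ N) = pull n a M ∪ pull n a N := by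
  ext e; simp [mem_pull]; tauto

theorem pull_card (n a : ℕ) (M : Finset Edge) : (pull n a M).card ≤ M.card := by
  refine Finset.card_le_card_of_injOn (tr a) ?_ (tr_inj a).injOn
  intro e he
  exact (mem_pull.1 he).2

theorem tr_mem (m n a : ℕ) (ha : a + (n + 1) ≤ m) (e : Edge) (he : e ∈ blk n) :
    tr a e ∈ sEdges m n := by
  obtain ⟨⟨x, y⟩, b⟩ := e
  cases b
  · rw [mem_blk_v] at he; simp only [tr]; rw [mem_sEdges_v]; omega
  · rw [mem_blk_h] at he; simp only [tr]; rw [mem_sEdges_h]; omega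

theorem list_inv (P : Vtx → Prop) (R : Vtx → Vtx → Prop) (L : Set Vtx)
    (hP : ∀ u v, u ∈ L → v ∈ L → R u v → P u → P v) : ∀ (l : List Vtx) (v w : Vtx),
    l.head? = some v → l.getLast? = some w → (∀ v ∈ l, v ∈ L) →
    (∀ q ∈ cp l, R q.1 q.2) → P v → P w
  | [], v, w, h, _, _, _, _ => by simp at h
  | [a], v, w, h, h', _, _, hv => by
    simp at h h'; rw [← h', h]; exact hv
  | a :: b :: l, v, w, h, h', hl, hq, hv => by
    have ha : a = v := by simpa using h
    subst ha
    refine list_inv P R L hP (b :: l) b w (by simp) ?_ ?_ ?_ ?_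
    · rw [List.getLast?_cons_cons] at h'; exact h'
    · intro v hv; exact hl v (List.mem_cons_of_mem _ hv)
    · intro q hq'
      apply hq
      simp only [cp, List.tail_cons, List.zip_cons_cons, List.mem_cons] at hq' ⊢
      exact Or.inr hq'
    · refine hP a b (hl _ (by simp)) (hl _ (by simp)) (hq (a, b) ?_) hv
      simp [cp]

theorem no_crossing (m n a : ℕ) (hn : 1 ≤ n) (ha : a + (n + 1) ≤ m) (M : Finset Edge)
    (h : ¬ Cr n (pull n a M)) : ¬ HasCrossing m n (↑M : Set Edge) := by
  rintro ⟨l, ⟨v, hv, hv1⟩, ⟨w, hw, hw1⟩, hl, hq⟩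
  let P : Vtx → Prop := fun v => v.1 ≤ a + 1 ∨ (v.1 ≤ a + n ∧ ∃ y : ℤ, 1 ≤ y ∧ y ≤ n ∧
    Relation.ReflTransGen (Adj (pull n a M)) (1, y) (v.1 - a, v.2))
  have := list_inv P (Adj M) (lamVtx m n) ?_ l v w hv hw hl
    (by intro q hq'; obtain ⟨e, he, hj⟩ := hq q hq'; exact ⟨e, by simpa using he, hj⟩)
    (by left; omega)
  · rcases this with h | h <;> omega
  · rintro ⟨x, y⟩ ⟨x', y'⟩ hu hu' hadj hPu
    simp only [lamVtx, Set.mem_setOf_eq] at hu hu'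
    by_cases hx' : x' ≤ a + 1
    · left; exact hx'
    right
    -- the reached vertex
    have main : ∃ y0 : ℤ, 1 ≤ y0 ∧ y0 ≤ n ∧
        Relation.ReflTransGen (Adj (pull n a M)) (1, y0) (x' - a, y') := by
      have hx : x ≤ a + n ∧ a + 1 ≤ x ∧ ∃ y0 : ℤ, 1 ≤ y0 ∧ y0 ≤ n ∧
          Relation.ReflTransGen (Adj (pull n a M)) (1, y0) (x - a, y) := by
        have hge : a + 1 ≤ x := by
          rw [adj_iff] at hadj; omega
        rcases hPu with hP | ⟨hP, y0, hy⟩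
        · have hxx : x = a + 1 := le_antisymm hP hge
          refine ⟨by omega, by omega, y, hu.2.2.1, hu.2.2.2, ?_⟩
          have : x - a = 1 := by omega
          rw [this]
        · exact ⟨hP, hge, y0, hy⟩
      obtain ⟨hx1, hx2, y0, g1, g2, g3⟩ := hx
      refine ⟨y0, g1, g2, g3.tail ?_⟩
      rw [adj_iff] at hadj ⊢
      simp only [mem_pull, mem_blk_h, mem_blk_v, tr, sub_add_cancel]
      rcases hadj with ⟨he, e1, e2⟩ | ⟨he, e1, e2⟩ | ⟨he, e1, e2⟩ | ⟨he, e1, e2⟩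
      · exact Or.inl ⟨⟨by omega, he⟩, by omega, by omega⟩
      · exact Or.inr (Or.inl ⟨⟨by omega, he⟩, by omega, by omega⟩)
      · exact Or.inr (Or.inr (Or.inl ⟨⟨by omega, he⟩, by omega, by omega⟩))
      · exact Or.inr (Or.inr (Or.inr ⟨⟨by omega, he⟩, by omega, by omega⟩))
    refine ⟨?_, main⟩
    by_contra hlt
    simp only at hlt
    have hx'' : x' = a + n + 1 := by
      have : x' ≤ x + 1 := by rw [adj_iff] at hadj; omega
      have : x ≤ a + n := by
        rcases hPu with h | h
        · simp only at h; omega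
        · exact h.1
      omega
    obtain ⟨y0, g1, g2, g3⟩ := main
    apply h
    refine ⟨y0, y', g1, g2, ?_⟩
    have : x' - a = n + 1 := by omega
    rw [← this]; exact g3

/-! Histories. -/

theorem altUnion_append (b : Bool) (h l : List (Finset Edge)) :
    altUnion b (h ++ l) = altUnion b h ∪ altUnion (if Even h.length then b else !b) l := by
  induction h generalizing b with
  | nil => simp [altUnion]
  | cons x h ih =>
    have e : Even (x :: h).length ↔ ¬ Even h.length := by
      rw [List.length_cons, Nat.even_add_one]
    cases b <;> simp only [List.cons_append, altUnion, ih, e] <;> split_ifs <;>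
      simp_all [Finset.union_assoc]

theorem hist_even (σ τ : Strategy) (t : ℕ) : Even (hist σ τ t).length := by
  induction t with
  | zero => simp [hist]
  | succ t ih => simp only [hist, List.length_append]; exact ih.add ⟨1, rfl⟩

theorem allClaimed_eq (h : List (Finset Edge)) :
    allClaimed h = firstClaimed h ∪ secondClaimed h := by
  unfold firstClaimed secondClaimed
  induction h with
  | nil => simp [allClaimed, altUnion]
  | cons x h ih =>
    have : allClaimed (x :: h) = x ∪ allClaimed h := rfl
    rw [this, ih]
    simp only [altUnion, Finset.union_assoc]
    rw [Finset.union_comm (altUnion true h)]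

theorem exists_legal (m n p : ℕ) (h : List (Finset Edge)) (Y : Finset Edge)
    (hY : (↑Y : Set Edge) ⊆ sEdges m n \ ↑(allClaimed h)) (hc : Y.card ≤ p) :
    ∃ mv, LegalMove (sEdges m n) h p mv ∧ Y ⊆ mv := by
  have hfin : (sEdges m n \ (↑(allClaimed h) : Set Edge)).Finite :=
    (sEdges_finite m n).subset Set.diff_subset
  have hY' : Y ⊆ hfin.toFinset := by
    intro e he; rw [Set.Finite.mem_toFinset]; exact hY he
  by_cases hp : p ≤ hfin.toFinset.card
  · obtain ⟨mv, a, b, c⟩ := Finset.exists_subsuperset_card_eq hY' hc hp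
    refine ⟨mv, ⟨?_, Or.inl c⟩, a⟩
    intro e he
    exact (Set.Finite.mem_toFinset hfin).1 (b he)
  · refine ⟨hfin.toFinset, ⟨by simp, Or.inr ⟨by omega, by simp⟩⟩, hY'⟩

/-- Position (Breaker to move) from which Breaker is fine. -/
def Good (m n p : ℕ) (M B : Finset Edge) : Prop :=
  ∃ a : ℕ, a + (n + 1) ≤ m ∧ ¬ BW (blk n) p (Cr n) (pull n a M) (pull n a B)

/-- Position (Maker to move) from which Breaker is fine. -/
def Safe (m n p : ℕ) (M B : Finset Edge) : Prop :=
  ∃ a : ℕ, a + (n + 1) ≤ m ∧ ∀ X, X ⊆ blk n \ (pull n a M ∪ pull n a B) → X.card ≤ p →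
    ¬ BW (blk n) p (Cr n) (pull n a M ∪ X) (pull n a B)

theorem Good.no_crossing {m n p : ℕ} (hn : 1 ≤ n) {M B : Finset Edge}
    (h : Good m n p M B) : ¬ HasCrossing m n (↑M : Set Edge) := by
  obtain ⟨a, ha, h⟩ := h
  exact CrossingGames.no_crossing m n a hn ha M fun hc => h (BW.win _ _ hc)

theorem Good.exists_move {m n p : ℕ} {h : List (Finset Edge)}
    (hg : Good m n p (firstClaimed h) (secondClaimed h)) :
    ∃ mv, LegalMove (sEdges m n) h p mv ∧
      Safe m n p (firstClaimed h) (secondClaimed h ∪ mv) := by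
  obtain ⟨a, ha, hb⟩ := hg
  obtain ⟨Y, hY, hc, hX⟩ := BW.not_iff hb
  obtain ⟨mv, hmv, hsub⟩ := exists_legal m n p h (Y.image (tr a)) (by
    intro e he
    rw [Finset.mem_coe] at he
    obtain ⟨e', he', rfl⟩ := Finset.mem_image.1 he
    have := hY he'
    rw [Finset.mem_sdiff, Finset.mem_union, mem_pull, mem_pull] at this
    refine ⟨tr_mem m n a ha e' this.1, ?_⟩
    rw [Finset.mem_coe, allClaimed_eq, Finset.mem_union]
    tauto) (Finset.card_image_le.trans hc)
  have hYmv : Y ⊆ pull n a mv := by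
    intro e he
    have h1 := hY he
    rw [Finset.mem_sdiff] at h1
    exact mem_pull.2 ⟨h1.1, hsub (Finset.mem_image_of_mem _ he)⟩
  refine ⟨mv, hmv, a, ha, ?_⟩
  intro X hXs hXc hbad
  rw [pull_union] at hXs hbad
  refine hX X ?_ hXc (hbad.mono (Cr.mono n) _ _ subset_rfl
    (Finset.union_subset_union_right hYmv))
  refine hXs.trans (Finset.sdiff_subset_sdiff subset_rfl ?_)
  exact Finset.union_subset_union_right (Finset.union_subset_union_right hYmv)

theorem LegalMove.card_le {b : Set Edge} {h : List (Finset Edge)} {k : ℕ} {mv : Finset Edge}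
    (hl : LegalMove b h k mv) : mv.card ≤ k := by
  rcases hl.2 with h | h
  · exact h.le
  · exact h.1.le

theorem Safe.good {m n p : ℕ} {h : List (Finset Edge)} {mv : Finset Edge}
    (hs : Safe m n p (firstClaimed h) (secondClaimed h))
    (hl : LegalMove (sEdges m n) h p mv) :
    Good m n p (firstClaimed h ∪ mv) (secondClaimed h) := by
  obtain ⟨a, ha, hX⟩ := hs
  refine ⟨a, ha, ?_⟩
  rw [pull_union]
  refine hX _ ?_ ((pull_card n a mv).trans hl.card_le)
  intro e he
  obtain ⟨h1, h2⟩ := mem_pull.1 he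
  have := (hl.1 h2).2
  rw [Finset.mem_coe, allClaimed_eq, Finset.mem_union] at this
  rw [Finset.mem_sdiff, Finset.mem_union, mem_pull, mem_pull]
  tauto

theorem good_start (m n p : ℕ) (hn : 1 ≤ n) (hmn : (p + 1) * (n + 1) ≤ m) (mv : Finset Edge)
    (hc : mv.card ≤ p) : Good m n p mv ∅ := by
  let f : Edge → ℕ := fun e => ((e.1.1 - 1) / ((n : ℤ) + 1)).toNat
  have hcard : (mv.image f).card < (Finset.range (p + 1)).card := by
    rw [Finset.card_range]
    exact Nat.lt_succ_of_le (Finset.card_image_le.trans hc)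
  obtain ⟨k, hk, hkn⟩ := Finset.exists_mem_notMem_of_card_lt_card hcard
  rw [Finset.mem_range] at hk
  refine ⟨k * (n + 1), ?_, ?_⟩
  · calc k * (n + 1) + (n + 1) = (k + 1) * (n + 1) := by ring
      _ ≤ (p + 1) * (n + 1) := Nat.mul_le_mul_right _ (by omega)
      _ ≤ m := hmn
  · have h1 : pull n (k * (n + 1)) mv = ∅ := by
      rw [Finset.eq_empty_iff_forall_notMem]
      intro e he
      obtain ⟨h1, h2⟩ := mem_pull.1 he
      apply hkn
      refine Finset.mem_image.2 ⟨_, h2, ?_⟩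
      have hx : 1 ≤ e.1.1 ∧ e.1.1 ≤ n := by
        obtain ⟨⟨x, y⟩, b⟩ := e
        cases b
        · rw [mem_blk_v] at h1; simp only; omega
        · rw [mem_blk_h] at h1; simp only; omega
      have : (e.1.1 + ((k * (n + 1) : ℕ) : ℤ) - 1) / ((n : ℤ) + 1) = k := by
        have e1 : e.1.1 + ((k * (n + 1) : ℕ) : ℤ) - 1 = (e.1.1 - 1) + k * ((n : ℤ) + 1) := by
          push_cast; ring
        rw [e1, Int.add_mul_ediv_right _ _ (by omega), Int.ediv_eq_zero_of_lt (by omega) (by omega)]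
        simp
      simp only [f, tr, this, Int.toNat_natCast]
    have h2 : pull n (k * (n + 1)) ∅ = ∅ := by simp [pull]
    rw [h1, h2]
    exact no_BW n p hn

open Classical in
/-- Breaker's strategy. -/
noncomputable def bstrat (m n p : ℕ) : Strategy := fun h =>
  if H : ∃ mv, LegalMove (sEdges m n) h p mv ∧
      Safe m n p (firstClaimed h) (secondClaimed h ∪ mv) then H.choose else ∅

theorem bstrat_spec {m n p : ℕ} {h : List (Finset Edge)}
    (hg : Good m n p (firstClaimed h) (secondClaimed h)) :
    LegalMove (sEdges m n) h p (bstrat m n p h) ∧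
      Safe m n p (firstClaimed h) (secondClaimed h ∪ bstrat m n p h) := by
  have H := hg.exists_move
  have : bstrat m n p h = H.choose := by unfold bstrat; rw [dif_pos H]
  rw [this]
  exact H.choose_spec

theorem first_snoc {h : List (Finset Edge)} (he : Even h.length) (u : Finset Edge) :
    firstClaimed (h ++ [u]) = firstClaimed h ∪ u := by
  simp [firstClaimed, altUnion_append, he, altUnion]

theorem second_snoc {h : List (Finset Edge)} (he : Even h.length) (u : Finset Edge) :
    secondClaimed (h ++ [u]) = secondClaimed h := by
  simp [secondClaimed, altUnion_append, he, altUnion]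

theorem first_snoc2 {h : List (Finset Edge)} (he : Even h.length) (u v : Finset Edge) :
    firstClaimed (h ++ [u, v]) = firstClaimed h ∪ u := by
  simp [firstClaimed, altUnion_append, he, altUnion]

theorem second_snoc2 {h : List (Finset Edge)} (he : Even h.length) (u v : Finset Edge) :
    secondClaimed (h ++ [u, v]) = secondClaimed h ∪ v := by
  simp [secondClaimed, altUnion_append, he, altUnion]

/-- **Proposition (ii).** For all (positive) natural numbers `m, n, p` with
`m ≥ (p+1)(n+1)`, Breaker has a winning strategy for the `(p,p)`-crossing game
on `S_{m×n}`. -/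
theorem breaker_wins_balanced_game_on_long_board
    (m n p : ℕ) (hn : 1 ≤ n) (hp : 1 ≤ p) (hmn : (p + 1) * (n + 1) ≤ m) :
    BreakerWins (sEdges m n) (HasCrossing m n) p p := by
  refine ⟨bstrat m n p, fun σ hσ => ?_⟩
  have good : ∀ t, Good m n p
      (firstClaimed (hist σ (bstrat m n p) t ++ [σ (hist σ (bstrat m n p) t)]))
      (secondClaimed (hist σ (bstrat m n p) t ++ [σ (hist σ (bstrat m n p) t)])) := by
    intro t
    induction t with
    | zero =>
      have h0 := (hσ 0).card_le
      simp only [hist, List.nil_append] at h0 ⊢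
      have := good_start m n p hn hmn _ h0
      simpa [firstClaimed, secondClaimed, altUnion] using this
    | succ t ih =>
      have hs := (bstrat_spec ih).2
      have he := hist_even σ (bstrat m n p) t
      rw [first_snoc he, second_snoc he] at hs
      have hs' : Safe m n p (firstClaimed (hist σ (bstrat m n p) (t + 1)))
          (secondClaimed (hist σ (bstrat m n p) (t + 1))) := by
        simp only [hist]
        rw [first_snoc2 he, second_snoc2 he]
        exact hs
      rw [first_snoc (hist_even _ _ _), second_snoc (hist_even _ _ _)]
      exact hs'.good (hσ (t + 1))
  refine ⟨fun t => (bstrat_spec (good t)).1, fun t => ?_⟩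
  cases t with
  | zero =>
    have := (good_start m n p hn hmn ∅ (by simp)).no_crossing hn
    simpa [hist, firstClaimed, altUnion] using this
  | succ t =>
    have := (good t).no_crossing hn
    have he := hist_even σ (bstrat m n p) t
    rw [first_snoc he] at this
    simp only [hist]
    rw [first_snoc2 he]
    exact this

end CrossingGames
end

section
/- Suppose a and b are vertices of a finite multigraph G such that G has a 2-positive subgraph containing both a and b. Then Join has a winning strategy for the Shannon switching game played on (G,a,b). -/
namespace ShannonSwitching

variable {V E : Type}

/-- `u` is joined to `v` by a walk using only edges from `F`, in the multigraph with
edge-endpoint map `ends`. -/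
def Reach (ends : E → V × V) (F : Set E) (u v : V) : Prop :=
  Relation.ReflTransGen
    (fun a b => ∃ e ∈ F,
      ((ends e).1 = a ∧ (ends e).2 = b) ∨ ((ends e).1 = b ∧ (ends e).2 = a)) u v

/-- The subgraph `(V', E')` of the multigraph is `k`-positive: it contains `k` pairwise
edge-disjoint connected spanning subgraphs. -/
def kPositive (ends : E → V × V) (V' : Set V) (E' : Set E) (k : ℕ) : Prop :=
  ∃ F : Fin k → Set E,
    (∀ i, F i ⊆ E') ∧
    (Pairwise fun i j => Disjoint (F i) (F j)) ∧
    ∀ i, ∀ u ∈ V', ∀ v ∈ V', Reach ends (F i) u v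

/-- A strategy in the Shannon switching game: given the list of all moves played so far
(oldest first), produce the next move (a finite set of edges). -/
abbrev SStrategy (E : Type) : Type := List (Finset E) → Finset E

variable [DecidableEq E]

/-- The union of the moves sitting in positions of the given parity of a history. -/
def altUnion : Bool → List (Finset E) → Finset E
  | _, [] => ∅
  | true, mv :: h => mv ∪ altUnion false h
  | false, _ :: h => altUnion true h

/-- All edges claimed by the player moving first in a history. -/
def firstClaimed (h : List (Finset E)) : Finset E := altUnion true h

/-- All edges claimed by the player moving second in a history. -/
def secondClaimed (h : List (Finset E)) : Finset E := altUnion false h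

/-- All edges claimed so far in a history. -/
def allClaimed (h : List (Finset E)) : Finset E := h.foldr (· ∪ ·) ∅

/-- The history of moves (oldest first) after `t` full rounds, when the player moving
first uses strategy `σ` and the player moving second uses strategy `τ`. -/
def hist (σ τ : SStrategy E) : ℕ → List (Finset E)
  | 0 => []
  | t + 1 =>
    let h := hist σ τ t
    h ++ [σ h, τ (h ++ [σ h])]

/-- The move `mv` is legal on `board` after the history `h` for a player of bias `k`: it
consists of as-yet-unclaimed edges of the board, exactly `k` of them unless fewer than
`k` unclaimed edges remain, in which case the player takes all of them. -/
def LegalMove (board : Set E) (h : List (Finset E)) (k : ℕ) (mv : Finset E) : Prop :=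
  (↑mv : Set E) ⊆ board \ ↑(allClaimed h) ∧
    (mv.card = k ∨ (mv.card < k ∧ board \ ↑(allClaimed h) ⊆ (↑mv : Set E)))

/-- The player moving first (with bias `k`) always moves legally when playing `σ`
against `τ`. -/
def FirstLegal (board : Set E) (k : ℕ) (σ τ : SStrategy E) : Prop :=
  ∀ t, LegalMove board (hist σ τ t) k (σ (hist σ τ t))

/-- The player moving second (with bias `k`) always moves legally when playing `τ`
against `σ`. -/
def SecondLegal (board : Set E) (k : ℕ) (σ τ : SStrategy E) : Prop :=
  ∀ t, LegalMove board (hist σ τ t ++ [σ (hist σ τ t)]) k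
    (τ (hist σ τ t ++ [σ (hist σ τ t)]))

/-- Join has a winning strategy for the `(k,k)`-Shannon switching game on `(G,a,b)`:
Cut moves first, deleting `k` unsafe edges per turn, Join answers by marking `k` unsafe
edges as safe per turn, and Join can guarantee that when all edges have been used up her
safe edges contain a path from `a` to `b` (equivalently, that at some point the safe
edges contain such a path, since safe edges only accumulate). -/
def JoinWins (ends : E → V × V) (a b : V) (k : ℕ) : Prop :=
  ∃ τ : SStrategy E, ∀ σ : SStrategy E,
    FirstLegal (Set.univ : Set E) k σ τ →
      SecondLegal (Set.univ : Set E) k σ τ ∧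
      ∃ t, Reach ends (↑(secondClaimed (hist σ τ t)) : Set E) a b

theorem Reach.mono {ends : E → V × V} {F G : Set E} (h : F ⊆ G) {u v : V}
    (hr : Reach ends F u v) : Reach ends G u v := by
  refine Relation.ReflTransGen.mono ?_ _ _ hr
  rintro a b ⟨e, he, h'⟩
  exact ⟨e, h he, h'⟩

theorem Reach.symm {ends : E → V × V} {F : Set E} {u v : V}
    (hr : Reach ends F u v) : Reach ends F v u := by
  unfold Reach at *
  induction hr with
  | refl => exact Relation.ReflTransGen.refl
  | tail _ h ih =>
    obtain ⟨e, he, h'⟩ := h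
    exact Relation.ReflTransGen.head ⟨e, he, h'.symm⟩ ih

theorem Reach.trans {ends : E → V × V} {F : Set E} {u v w : V}
    (h : Reach ends F u v) (h' : Reach ends F v w) : Reach ends F u w :=
  Relation.ReflTransGen.trans h h'

theorem Reach.edge {ends : E → V × V} {F : Set E} {e : E} (he : e ∈ F) :
    Reach ends F (ends e).1 (ends e).2 :=
  Relation.ReflTransGen.single ⟨e, he, Or.inl ⟨rfl, rfl⟩⟩

theorem Reach.replace {ends : E → V × V} {F G : Set E}
    (h : ∀ e ∈ F, Reach ends G (ends e).1 (ends e).2) {u v : V}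
    (hr : Reach ends F u v) : Reach ends G u v := by
  unfold Reach at hr
  induction hr with
  | refl => exact Relation.ReflTransGen.refl
  | tail _ h1 ih =>
    obtain ⟨e, he, ⟨rfl, rfl⟩ | ⟨rfl, rfl⟩⟩ := h1
    · exact ih.trans (h e he)
    · exact ih.trans (h e he).symm

theorem crossing {r : V → V → Prop} {P : V → Prop} {u v : V}
    (hr : Relation.ReflTransGen r u v) (hu : P u) (hv : ¬ P v) :
    ∃ p q, r p q ∧ P p ∧ ¬ P q := by
  induction hr with
  | refl => exact absurd hu hv
  | @tail b c _ h ih =>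
    by_cases hb : P b
    · exact ⟨b, c, h, hb, hv⟩
    · exact ih hb

theorem Reach.split {ends : E → V × V} {A : Set E} (e : E) {u w : V}
    (hr : Reach ends A u w) :
    Reach ends (A \ {e}) u w ∨
    (Reach ends (A \ {e}) u (ends e).1 ∧ Reach ends (A \ {e}) (ends e).2 w) ∨
    (Reach ends (A \ {e}) u (ends e).2 ∧ Reach ends (A \ {e}) (ends e).1 w) := by
  unfold Reach at hr
  have rf : ∀ x, Reach ends (A \ {e}) x x := fun x => Relation.ReflTransGen.refl
  induction hr with
  | refl => exact Or.inl (rf _)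
  | @tail p q _ h1 ih =>
    obtain ⟨f, hf, h⟩ := h1
    by_cases hfe : f = e
    · subst hfe
      obtain ⟨rfl, rfl⟩ | ⟨rfl, rfl⟩ := h
      · rcases ih with h | ⟨h, -⟩ | ⟨h, -⟩
        · exact Or.inr (Or.inl ⟨h, rf _⟩)
        · exact Or.inr (Or.inl ⟨h, rf _⟩)
        · exact Or.inl h
      · rcases ih with h | ⟨h, -⟩ | ⟨h, -⟩
        · exact Or.inr (Or.inr ⟨h, rf _⟩)
        · exact Or.inl h
        · exact Or.inr (Or.inr ⟨h, rf _⟩)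
    · have hs : Reach ends (A \ {e}) p q :=
        Relation.ReflTransGen.single ⟨f, ⟨hf, hfe⟩, h⟩
      rcases ih with h | ⟨h, h'⟩ | ⟨h, h'⟩
      · exact Or.inl (h.trans hs)
      · exact Or.inr (Or.inl ⟨h, h'.trans hs⟩)
      · exact Or.inr (Or.inr ⟨h, h'.trans hs⟩)

def Conn (ends : E → V × V) (V' : Set V) (A : Set E) : Prop :=
  ∀ u ∈ V', ∀ v ∈ V', Reach ends A u v

theorem exchange {ends : E → V × V} {V' : Set V} {A B : Set E}
    (hBV : ∀ e ∈ B, (ends e).1 ∈ V' ∧ (ends e).2 ∈ V')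
    (hA : Conn ends V' A) (hB : Conn ends V' B) (e : E) :
    Conn ends V' (A \ {e}) ∨ ∃ f ∈ B, Conn ends V' (insert f (A \ {e})) := by
  by_cases hc : Conn ends V' (A \ {e})
  · exact Or.inl hc
  right
  unfold Conn at hc
  push Not at hc
  obtain ⟨u, hu, v, hv, huv⟩ := hc
  obtain ⟨p, q, ⟨f, hf, hpq⟩, hp, hq⟩ :=
    crossing (P := fun w => Reach ends (A \ {e}) u w) (hB u hu v hv)
      Relation.ReflTransGen.refl huv
  refine ⟨f, hf, ?_⟩
  have hqV : q ∈ V' := by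
    rcases hpq with ⟨_, rfl⟩ | ⟨rfl, _⟩
    · exact (hBV f hf).2
    · exact (hBV f hf).1
  have hsub : A \ {e} ⊆ insert f (A \ {e}) := Set.subset_insert _ _
  have hpq' : Reach ends (insert f (A \ {e})) p q :=
    Relation.ReflTransGen.single ⟨f, Set.mem_insert _ _, hpq⟩
  have huq : Reach ends (insert f (A \ {e})) u q := (hp.mono hsub).trans hpq'
  have hxy : Reach ends (insert f (A \ {e})) (ends e).1 (ends e).2 := by
    rcases (hA u hu q hqV).split e with h | ⟨h, h'⟩ | ⟨h, h'⟩
    · exact absurd h hq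
    · exact ((h.mono hsub).symm.trans huq).trans (h'.mono hsub).symm
    · exact ((h'.mono hsub).trans huq.symm).trans (h.mono hsub)
  intro x hx y hy
  refine (hA x hx y hy).replace ?_
  intro g hg
  by_cases hge : g = e
  · subst hge; exact hxy
  · exact Reach.edge (hsub ⟨hg, hge⟩)

/-- Join's invariant: safe set `S`, deleted set `C`. -/
def Inv (ends : E → V × V) (V' : Set V) (S C : Finset E) : Prop :=
  ∃ A B : Set E, (∀ e ∈ A, (ends e).1 ∈ V' ∧ (ends e).2 ∈ V') ∧
    (∀ e ∈ B, (ends e).1 ∈ V' ∧ (ends e).2 ∈ V') ∧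
    (∀ e ∈ A, e ∈ B → e ∈ S) ∧ (∀ e ∈ A, e ∉ C) ∧ (∀ e ∈ B, e ∉ C) ∧
    Conn ends V' A ∧ Conn ends V' B

theorem Inv.mono {ends : E → V × V} {V' : Set V} {S S' C : Finset E} (h : S ⊆ S')
    (hI : Inv ends V' S C) : Inv ends V' S' C := by
  obtain ⟨A, B, h1, h2, h3, h4⟩ := hI
  exact ⟨A, B, h1, h2, fun e he he' => h (h3 e he he'), h4⟩

theorem step_aux {ends : E → V × V} {V' : Set V} {S C : Finset E} {e : E} {A B : Set E}
    (h1 : ∀ e ∈ A, (ends e).1 ∈ V' ∧ (ends e).2 ∈ V')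
    (h2 : ∀ e ∈ B, (ends e).1 ∈ V' ∧ (ends e).2 ∈ V')
    (h3 : ∀ e ∈ A, e ∈ B → e ∈ S) (h4 : ∀ e ∈ A, e ∉ C) (h5 : ∀ e ∈ B, e ∉ C)
    (h6 : Conn ends V' A) (h7 : Conn ends V' B) (heB : e ∉ B) :
    Inv ends V' S (C ∪ {e}) ∨
      ∃ f, f ∉ C ∪ {e} ∧ Inv ends V' (S ∪ {f}) (C ∪ {e}) := by
  have h5' : ∀ x ∈ B, x ∉ C ∪ {e} := by
    intro x hx hx'
    rcases Finset.mem_union.1 hx' with h | h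
    · exact h5 x hx h
    · exact heB (Finset.mem_singleton.1 h ▸ hx)
  have h4' : ∀ x ∈ A \ {e}, x ∉ C ∪ {e} := by
    rintro x ⟨hx, hxe⟩ hx'
    rcases Finset.mem_union.1 hx' with h | h
    · exact h4 x hx h
    · exact hxe (Finset.mem_singleton.1 h)
  rcases exchange h2 h6 h7 e with h | ⟨f, hf, h⟩
  · exact Or.inl ⟨A \ {e}, B, fun x hx => h1 x hx.1, h2, fun x hx => h3 x hx.1, h4', h5', h, h7⟩
  · refine Or.inr ⟨f, h5' f hf, insert f (A \ {e}), B, ?_, h2, ?_, ?_, h5', h, h7⟩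
    · rintro x (rfl | hx)
      · exact h2 x hf
      · exact h1 x hx.1
    · rintro x (rfl | hx) hxB
      · simp
      · exact Finset.mem_union_left _ (h3 x hx.1 hxB)
    · rintro x (rfl | hx)
      · exact h5' x hf
      · exact h4' x hx

theorem step {ends : E → V × V} {V' : Set V} {S C : Finset E} {e : E}
    (hI : Inv ends V' S C) (he : e ∉ S) :
    Inv ends V' S (C ∪ {e}) ∨
      ∃ f, f ∉ C ∪ {e} ∧ Inv ends V' (S ∪ {f}) (C ∪ {e}) := by
  obtain ⟨A, B, h1, h2, h3, h4, h5, h6, h7⟩ := hI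
  by_cases heB : e ∈ B
  · have heA : e ∉ A := fun h => he (h3 e h heB)
    exact step_aux h2 h1 (fun x hx hx' => h3 x hx' hx) h5 h4 h7 h6 heA
  · exact step_aux h1 h2 h3 h4 h5 h6 h7 heB

theorem move {ends : E → V × V} {V' : Set V} {S C mv : Finset E}
    (hI : Inv ends V' S C) (hmv : mv.card ≤ 1) (hd : Disjoint mv S) (h : List (Finset E))
    (hh : allClaimed h = (C ∪ mv) ∪ S) :
    ∃ m, LegalMove (Set.univ : Set E) h 1 m ∧ Inv ends V' (S ∪ m) (C ∪ mv) := by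
  have key : Inv ends V' S (C ∪ mv) ∨
      ∃ f, f ∉ C ∪ mv ∧ Inv ends V' (S ∪ {f}) (C ∪ mv) := by
    rcases Nat.le_one_iff_eq_zero_or_eq_one.1 hmv with h0 | h0
    · left
      rw [Finset.card_eq_zero.1 h0, Finset.union_empty]; exact hI
    · obtain ⟨e, rfl⟩ := Finset.card_eq_one.1 h0
      exact step hI (by simpa using hd)
  have arb : Inv ends V' S (C ∪ mv) →
      ∃ m, LegalMove (Set.univ : Set E) h 1 m ∧ Inv ends V' (S ∪ m) (C ∪ mv) := by
    intro hI'
    by_cases hf : ∃ g, g ∉ allClaimed h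
    · obtain ⟨g, hg⟩ := hf
      exact ⟨{g}, ⟨by simpa using hg, Or.inl (by simp)⟩, hI'.mono Finset.subset_union_left⟩
    · push Not at hf
      refine ⟨∅, ⟨by simp, Or.inr ⟨by simp, ?_⟩⟩, hI'.mono Finset.subset_union_left⟩
      intro x hx
      exact absurd (hf x) hx.2
  rcases key with hI' | ⟨f, hf, hI'⟩
  · exact arb hI'
  · by_cases hfS : f ∈ S
    · apply arb
      rwa [Finset.union_eq_left.2 (by simpa using hfS)] at hI'
    · refine ⟨{f}, ⟨?_, Or.inl (by simp)⟩, hI'⟩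
      rw [hh]
      intro x hx
      simp only [Finset.coe_singleton, Set.mem_singleton_iff] at hx
      subst hx
      refine ⟨trivial, fun hx => ?_⟩
      rcases Finset.mem_union.1 hx with h | h
      · exact hf h
      · exact hfS h

theorem alt_append_pair (b : Bool) (h : List (Finset E)) (hl : Even h.length)
    (l : List (Finset E)) : altUnion b (h ++ l) = altUnion b h ∪ altUnion b l := by
  match h with
  | [] => cases b <;> simp [altUnion]
  | [x] => simp at hl
  | x :: y :: h' =>
    have hl' : Even h'.length := by
      simpa [Nat.even_add_one] using hl
    cases b
    · simp only [List.cons_append, altUnion, alt_append_pair false h' hl' l, Finset.union_assoc]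
    · simp only [List.cons_append, altUnion, alt_append_pair true h' hl' l, Finset.union_assoc]

theorem allClaimed_eq (h : List (Finset E)) :
    allClaimed h = altUnion true h ∪ altUnion false h := by
  induction h with
  | nil => simp [allClaimed, altUnion]
  | cons x h ih =>
    have : allClaimed (x :: h) = x ∪ allClaimed h := rfl
    rw [this, ih]
    simp only [altUnion]
    rw [Finset.union_assoc, Finset.union_comm (altUnion true h)]

theorem hist_even (σ τ : SStrategy E) (t : ℕ) : Even (hist σ τ t).length := by
  induction t with
  | zero => simp [hist]
  | succ t ih => simp [hist, Nat.even_add, ih]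

open Classical in
/-- Join's strategy. -/
noncomputable def joinStrat (ends : E → V × V) (V' : Set V) : SStrategy E := fun h =>
  if hx : ∃ m, LegalMove (Set.univ : Set E) h 1 m ∧
      Inv ends V' (secondClaimed h ∪ m) (firstClaimed h) then hx.choose else ∅

theorem joinStrat_spec {ends : E → V × V} {V' : Set V} {h : List (Finset E)}
    (hx : ∃ m, LegalMove (Set.univ : Set E) h 1 m ∧
      Inv ends V' (secondClaimed h ∪ m) (firstClaimed h)) :
    LegalMove (Set.univ : Set E) h 1 (joinStrat ends V' h) ∧
      Inv ends V' (secondClaimed h ∪ joinStrat ends V' h) (firstClaimed h) := by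
  unfold joinStrat
  rw [dif_pos hx]
  exact hx.choose_spec

theorem round {ends : E → V × V} {V' : Set V} {h : List (Finset E)} {mv : Finset E}
    (hl : Even h.length) (hI : Inv ends V' (secondClaimed h) (firstClaimed h))
    (hmv : LegalMove (Set.univ : Set E) h 1 mv) :
    LegalMove (Set.univ : Set E) (h ++ [mv]) 1 (joinStrat ends V' (h ++ [mv])) ∧
    Inv ends V' (secondClaimed (h ++ [mv, joinStrat ends V' (h ++ [mv])]))
      (firstClaimed (h ++ [mv, joinStrat ends V' (h ++ [mv])])) := by
  have e1 : firstClaimed (h ++ [mv]) = firstClaimed h ∪ mv := by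
    simp [firstClaimed, alt_append_pair _ _ hl, altUnion]
  have e2 : secondClaimed (h ++ [mv]) = secondClaimed h := by
    simp [secondClaimed, alt_append_pair _ _ hl, altUnion]
  have e3 : ∀ m, firstClaimed (h ++ [mv, m]) = firstClaimed h ∪ mv := by
    intro m
    simp [firstClaimed, alt_append_pair _ _ hl, altUnion]
  have e4 : ∀ m, secondClaimed (h ++ [mv, m]) = secondClaimed h ∪ m := by
    intro m
    simp [secondClaimed, alt_append_pair _ _ hl, altUnion]
  have hc : allClaimed (h ++ [mv]) = (firstClaimed h ∪ mv) ∪ secondClaimed h := by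
    rw [allClaimed_eq, ← e1, ← e2]; rfl
  have hcard : mv.card ≤ 1 := by
    rcases hmv.2 with h | h <;> omega
  have hd : Disjoint mv (secondClaimed h) := by
    rw [Finset.disjoint_left]
    intro x hx hx'
    refine (hmv.1 hx).2 ?_
    rw [allClaimed_eq]
    exact Finset.mem_union_right _ hx'
  have := joinStrat_spec (ends := ends) (V' := V') (h := h ++ [mv])
    (by rw [e1, e2]; exact move hI hcard hd _ hc)
  refine ⟨this.1, ?_⟩
  rw [e3, e4]
  have h2 := this.2
  rwa [e1, e2] at h2

/-- **Lehman's theorem.** If `a, b` are vertices of a finite multigraph `G` (given by an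
edge-endpoint map `ends`) admitting a `2`-positive subgraph `(V', E')` containing both
`a` and `b`, then Join has a winning strategy for the Shannon switching game on
`(G, a, b)`. -/
theorem join_wins_shannon_switching_game
    {V E : Type} [Fintype V] [Fintype E] [DecidableEq E]
    (ends : E → V × V) (a b : V)
    (hpos : ∃ (V' : Set V) (E' : Set E), a ∈ V' ∧ b ∈ V' ∧
      (∀ e ∈ E', (ends e).1 ∈ V' ∧ (ends e).2 ∈ V') ∧
      kPositive ends V' E' 2) :
    JoinWins ends a b 1 := by
  obtain ⟨V', E', ha, hb, hE, F, hF, hdis, hconn⟩ := hpos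
  have hI0 : Inv ends V' (∅ : Finset E) ∅ := by
    refine ⟨F 0, F 1, fun e he => hE e (hF 0 he), fun e he => hE e (hF 1 he), ?_,
      by simp, by simp, hconn 0, hconn 1⟩
    intro e h0 h1
    exact absurd h1 (Set.disjoint_left.1 (hdis (show (0 : Fin 2) ≠ 1 by decide)) h0)
  refine ⟨joinStrat ends V', fun σ hσ => ?_⟩
  have hI : ∀ t, Inv ends V' (secondClaimed (hist σ (joinStrat ends V') t))
      (firstClaimed (hist σ (joinStrat ends V') t)) := by
    intro t
    induction t with
    | zero => exact hI0
    | succ t ih => exact (round (hist_even _ _ t) ih (hσ t)).2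
  refine ⟨fun t => (round (hist_even _ _ t) (hI t) (hσ t)).1, Fintype.card E, ?_⟩
  have hcard : ∀ t, allClaimed (hist σ (joinStrat ends V') t) = Finset.univ ∨
      t ≤ (allClaimed (hist σ (joinStrat ends V') t)).card := by
    intro t
    induction t with
    | zero => right; exact Nat.zero_le _
    | succ t ih =>
      have hsub : allClaimed (hist σ (joinStrat ends V') t) ∪
          σ (hist σ (joinStrat ends V') t) ⊆ allClaimed (hist σ (joinStrat ends V') (t + 1)) := by
        rw [allClaimed_eq, allClaimed_eq]
        simp only [hist, alt_append_pair _ _ (hist_even σ (joinStrat ends V') t), altUnion]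
        intro x
        simp only [Finset.mem_union]
        tauto
      rcases ih with ih | ih
      · left
        rw [ih] at hsub
        exact Finset.eq_univ_iff_forall.2 fun x => hsub (by simp)
      · have hl := hσ t
        have hd : Disjoint (allClaimed (hist σ (joinStrat ends V') t))
            (σ (hist σ (joinStrat ends V') t)) := by
          rw [Finset.disjoint_right]
          intro x hx hx'
          exact (hl.1 hx).2 hx'
        rcases hl.2 with h | ⟨_, h⟩
        · right
          have := Finset.card_le_card hsub
          rw [Finset.card_union_of_disjoint hd] at this
          omega
        · left
          refine Finset.eq_univ_iff_forall.2 fun x => hsub ?_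
          by_cases hx : x ∈ allClaimed (hist σ (joinStrat ends V') t)
          · exact Finset.mem_union_left _ hx
          · exact Finset.mem_union_right _ (h ⟨trivial, hx⟩)
  have huniv : allClaimed (hist σ (joinStrat ends V') (Fintype.card E)) = Finset.univ := by
    rcases hcard (Fintype.card E) with h | h
    · exact h
    · exact (Finset.card_eq_iff_eq_univ _).1 (le_antisymm (Finset.card_le_univ _) h)
  obtain ⟨A, B, -, -, -, h4, -, h6, -⟩ := hI (Fintype.card E)
  refine (h6 a ha b hb).mono ?_
  intro x hx
  have hxu : x ∈ allClaimed (hist σ (joinStrat ends V') (Fintype.card E)) := by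
    rw [huniv]; simp
  rw [allClaimed_eq] at hxu
  rcases Finset.mem_union.1 hxu with h | h
  · exact absurd h (h4 x hx)
  · exact h

end ShannonSwitching
end
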